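/- Let g : ℝ^n → [0,∞) be continuous and α be a locally Lipschitz class K function. For every x ∈ ℝ^n and T ≥ 0, let S(x,T) = sup over pairs (u, ξ) of control signals u ∈ 𝕌 and admissible trajectories ξ from x under u of min_{t ∈ [0,T]} β_α(g(ξ(t)), T − t). Then 0 ≤ S(x,T) ≤ β_α(g(x), T), and there exists a unique v ∈ [0,∞) such that β_α(v, T) = S(x,T); moreover this v lies in [0, g(x)]. -/

import Mathlib

open Set Filter MeasureTheory Topology

noncomputable section

/-- `α : [0,∞) → [0,∞)` is a class `K` function: continuous, strictly increasing, `α 0 = 0`. -/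
def IsClassK (α : ℝ → ℝ) : Prop :=
  ContinuousOn α (Set.Ici 0) ∧ StrictMonoOn α (Set.Ici 0) ∧ α 0 = 0

/-- `α` is a locally Lipschitz class `K` function on `[0,∞)`. -/
def IsLocallyLipschitzClassK (α : ℝ → ℝ) : Prop :=
  IsClassK α ∧
    ∀ x ∈ Set.Ici (0 : ℝ), ∃ K : NNReal, ∃ s ∈ nhdsWithin x (Set.Ici (0 : ℝ)),
      LipschitzOnWith K α s

/-- `β` is the function `β_α`: for each `r ≥ 0`, `t ↦ β r t` solves `y' = -α y`, `y 0 = r`,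
staying in `[0, r]` for all `t ≥ 0`. -/
def IsBetaFor (α : ℝ → ℝ) (β : ℝ → ℝ → ℝ) : Prop :=
  ∀ r : ℝ, 0 ≤ r →
    β r 0 = r ∧ ∀ t : ℝ, 0 ≤ t →
      0 ≤ β r t ∧ β r t ≤ r ∧ HasDerivWithinAt (β r) (-α (β r t)) (Set.Ici 0) t

/-- `u` is an admissible control signal: measurable, valued in `U` on `[0,∞)`. -/
def IsControl {m : ℕ} (U : Set (Fin m → ℝ)) (u : ℝ → Fin m → ℝ) : Prop :=
  Measurable u ∧ ∀ t : ℝ, 0 ≤ t → u t ∈ U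

/-- `ξ` is an admissible trajectory from `x` under the control signal `u`. -/
def IsTrajectory {n m : ℕ} (f : (Fin n → ℝ) → (Fin m → ℝ) → Fin n → ℝ)
    (x : Fin n → ℝ) (u : ℝ → Fin m → ℝ) (ξ : ℝ → Fin n → ℝ) : Prop :=
  Continuous ξ ∧ ∀ t : ℝ, 0 ≤ t → ξ t = x + ∫ s in (0 : ℝ)..t, f (ξ s) (u s)

/-- The anti-discounted payoff defining the CB-VF: the supremum over control signals `u`
and admissible trajectories `ξ` from `x` of `min_{t ∈ [0,T]} β_α (g (ξ t)) (T - t)`. -/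
def cbvfPayoff {n m : ℕ} (f : (Fin n → ℝ) → (Fin m → ℝ) → Fin n → ℝ)
    (U : Set (Fin m → ℝ)) (β : ℝ → ℝ → ℝ) (g : (Fin n → ℝ) → ℝ)
    (x : Fin n → ℝ) (T : ℝ) : ℝ :=
  sSup {y : ℝ | ∃ u ξ, IsControl U u ∧ IsTrajectory f x u ξ ∧
    y = sInf ((fun t => β (g (ξ t)) (T - t)) '' Set.Icc 0 T)}

/-- Contraction of the flow. -/
theorem beta_contract {α : ℝ → ℝ} (hα : IsLocallyLipschitzClassK α) {β : ℝ → ℝ → ℝ}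
    (hβ : IsBetaFor α β) {r s T : ℝ} (hr : 0 ≤ r) (hs : 0 ≤ s) (hT : 0 ≤ T) :
    |β r T - β s T| ≤ |r - s| := by
  have hd : ∀ t : ℝ, 0 ≤ t → HasDerivWithinAt (fun t => (β r t - β s t) ^ 2)
      (2 * (β r t - β s t) * (-α (β r t) - -α (β s t))) (Set.Ici 0) t := by
    intro t ht
    have h := ((((hβ r hr).2 t ht).2.2).sub (((hβ s hs).2 t ht).2.2)).pow 2
    refine HasDerivWithinAt.congr_deriv (f := fun t => (β r t - β s t) ^ 2) h ?_
    simp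
  have hanti : AntitoneOn (fun t => (β r t - β s t) ^ 2) (Set.Ici 0) := by
    apply antitoneOn_of_hasDerivWithinAt_nonpos (convex_Ici 0)
      (f' := fun t => 2 * (β r t - β s t) * (-α (β r t) - -α (β s t)))
    · exact fun t ht => (hd t ht).continuousWithinAt
    · intro t ht
      exact (hd t (interior_subset ht)).mono interior_subset
    · intro t ht
      have ht0 : (0:ℝ) ≤ t := interior_subset ht
      have h1 := ((hβ r hr).2 t ht0).1
      have h2 := ((hβ s hs).2 t ht0).1
      rcases le_total (β r t) (β s t) with h | h
      · have := hα.1.2.1.monotoneOn h1 h2 h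
        nlinarith
      · have := hα.1.2.1.monotoneOn h2 h1 h
        nlinarith
  have h := hanti (Set.mem_Ici.2 le_rfl) (Set.mem_Ici.2 hT) hT
  simp only [(hβ r hr).1, (hβ s hs).1] at h
  exact sq_le_sq.1 h

/-- Injectivity of the flow. -/
theorem beta_inj {α : ℝ → ℝ} (hα : IsLocallyLipschitzClassK α) {β : ℝ → ℝ → ℝ}
    (hβ : IsBetaFor α β) {r s T : ℝ} (hr : 0 ≤ r) (hs : 0 ≤ s) (hT : 0 ≤ T)
    (h : β r T = β s T) : r = s := by
  have hloc : LocallyLipschitzOn (Set.Icc 0 (max r s)) α := by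
    intro x hx
    obtain ⟨K, t, ht, hK⟩ := hα.2 x hx.1
    exact ⟨K, t, nhdsWithin_mono x Set.Icc_subset_Ici_self ht, hK⟩
  obtain ⟨K, hK⟩ := hloc.exists_lipschitzOnWith_of_compact isCompact_Icc
  have hcont : ∀ q : ℝ, 0 ≤ q → ContinuousOn (β q) (Set.Icc 0 T) := fun q hq t ht =>
    (((hβ q hq).2 t ht.1).2.2.continuousWithinAt).mono Set.Icc_subset_Ici_self
  have hder : ∀ q : ℝ, 0 ≤ q → ∀ t ∈ Set.Ioc 0 T,
      HasDerivWithinAt (β q) (-α (β q t)) (Set.Iic t) t := fun q hq t ht =>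
    (((hβ q hq).2 t ht.1.le).2.2.hasDerivAt (Ici_mem_nhds ht.1)).hasDerivWithinAt
  have key := ODE_solution_unique_of_mem_Icc_left (v := fun _ y => -α y)
    (s := fun _ => Set.Icc 0 (max r s)) (K := K) (a := 0) (b := T) (f := β r) (g := β s)
    (fun t _ => hK.neg) (hcont r hr) (hder r hr)
    (fun t ht => ⟨((hβ r hr).2 t ht.1.le).1,
      ((hβ r hr).2 t ht.1.le).2.1.trans (le_max_left _ _)⟩)
    (hcont s hs) (hder s hs)
    (fun t ht => ⟨((hβ s hs).2 t ht.1.le).1,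
      ((hβ s hs).2 t ht.1.le).2.1.trans (le_max_right _ _)⟩) h
  have := key (Set.left_mem_Icc.2 hT)
  rwa [(hβ r hr).1, (hβ s hs).1] at this

/-- For `S (x,T) = sup_{(u,ξ)} min_{t ∈ [0,T]} β_α (g (ξ t)) (T-t)` one has
`0 ≤ S (x,T) ≤ β_α (g x) T`; there is a unique `v ≥ 0` with `β_α v T = S (x,T)`, and this
`v` lies in `[0, g x]`. -/
theorem cbvf_well_defined {n m : ℕ}
    (f : (Fin n → ℝ) → (Fin m → ℝ) → Fin n → ℝ) (U : Set (Fin m → ℝ))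
    (hU : IsCompact U)
    (hf : ∃ K : NNReal, LipschitzOnWith K (Function.uncurry f) (Set.univ ×ˢ U))
    (α : ℝ → ℝ) (hα : IsLocallyLipschitzClassK α)
    (β : ℝ → ℝ → ℝ) (hβ : IsBetaFor α β)
    (g : (Fin n → ℝ) → ℝ) (hg : Continuous g) (hg0 : ∀ x, 0 ≤ g x) :
    ∀ x : Fin n → ℝ, ∀ T : ℝ, 0 ≤ T →
      (0 ≤ cbvfPayoff f U β g x T ∧ cbvfPayoff f U β g x T ≤ β (g x) T) ∧
      (∃! v : ℝ, 0 ≤ v ∧ β v T = cbvfPayoff f U β g x T) ∧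
      (∀ v : ℝ, 0 ≤ v → β v T = cbvfPayoff f U β g x T → v ∈ Set.Icc 0 (g x)) := by
  intro x T hT
  have hS0 : 0 ≤ cbvfPayoff f U β g x T := by
    apply Real.sSup_nonneg
    rintro y ⟨u, ξ, -, -, rfl⟩
    apply Real.sInf_nonneg
    rintro _ ⟨t, ht, rfl⟩
    exact ((hβ _ (hg0 _)).2 _ (sub_nonneg.2 ht.2)).1
  have hS1 : cbvfPayoff f U β g x T ≤ β (g x) T := by
    refine Real.sSup_le ?_ ((hβ _ (hg0 _)).2 _ hT).1
    rintro y ⟨u, ξ, -, hξ, rfl⟩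
    have h0 : ξ 0 = x := by simpa using hξ.2 0 le_rfl
    apply csInf_le
    · refine ⟨0, ?_⟩
      rintro _ ⟨t, ht, rfl⟩
      exact ((hβ _ (hg0 _)).2 _ (sub_nonneg.2 ht.2)).1
    · exact ⟨0, Set.left_mem_Icc.2 hT, by simp [h0]⟩
  have hcont : ContinuousOn (fun v => β v T) (Set.Icc 0 (g x)) := by
    have : LipschitzOnWith 1 (fun v => β v T) (Set.Icc 0 (g x)) := by
      apply LipschitzOnWith.of_dist_le_mul
      intro a ha b hb
      simpa [Real.dist_eq] using beta_contract hα hβ ha.1 hb.1 hT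
    exact this.continuousOn
  have hz : β 0 T = 0 :=
    le_antisymm ((hβ 0 le_rfl).2 T hT).2.1 ((hβ 0 le_rfl).2 T hT).1
  obtain ⟨w, hw, hwS⟩ := intermediate_value_Icc (hg0 x) hcont
    (show cbvfPayoff f U β g x T ∈ Set.Icc (β 0 T) (β (g x) T) from ⟨hz.le.trans hS0, hS1⟩)
  have huniq : ∀ v : ℝ, 0 ≤ v → β v T = cbvfPayoff f U β g x T → v = w :=
    fun v hv hvS => beta_inj hα hβ hv hw.1 hT (hvS.trans hwS.symm)
  exact ⟨⟨hS0, hS1⟩, ⟨w, ⟨hw.1, hwS⟩, fun v hv => huniq v hv.1 hv.2⟩,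
    fun v hv hvS => (huniq v hv hvS) ▸ hw⟩
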